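/- Let I ⊆ ℝ be a nonempty open interval, p ∈ I, n ∈ ℕ∪{0}, and μ a bounded signed Borel measure on [0,1]. Then the function f := φ⁺_{p,n}, restricted to I, satisfies ∫_{[0,1]} f((1−t)x + t y) dμ(t) ≥ 0 for all x, y ∈ I with x < y if and only if both μ_n^+(λ) ≥ 0 for all λ ∈ [0,1] and μ_n(λ) ≥ 0 for all λ ∈ (−∞,0]. -/

import Mathlib

open MeasureTheory Set

/-- Integral of `f` over the set `A` with respect to the (automatically bounded) signed
Borel measure `μ`, defined via the Jordan decomposition. -/
noncomputable def sInt (μ : MeasureTheory.SignedMeasure ℝ) (A : Set ℝ) (f : ℝ → ℝ) : ℝ :=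
  (∫ t in A, f t ∂μ.toJordanDecomposition.posPart) -
  (∫ t in A, f t ∂μ.toJordanDecomposition.negPart)

/-- `μ_k(τ) = ∫_{[0,1]} (t-τ)^k dμ(t)` (with the convention `0^0 = 1`). -/
noncomputable def muK (μ : MeasureTheory.SignedMeasure ℝ) (k : ℕ) (τ : ℝ) : ℝ :=
  sInt μ (Icc 0 1) (fun t => (t - τ) ^ k)

/-- `μ_k^-(τ) = ∫_{[0,τ)} (t-τ)^k dμ(t)`. -/
noncomputable def muMinus (μ : MeasureTheory.SignedMeasure ℝ) (k : ℕ) (τ : ℝ) : ℝ :=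
  sInt μ (Ico 0 τ) (fun t => (t - τ) ^ k)

/-- `μ_k^+(τ) = ∫_{(τ,1]} (t-τ)^k dμ(t)`. -/
noncomputable def muPlus (μ : MeasureTheory.SignedMeasure ℝ) (k : ℕ) (τ : ℝ) : ℝ :=
  sInt μ (Ioc τ 1) (fun t => (t - τ) ^ k)

/-- The `n`th-order divided difference of `f` at the points `x 0, …, x n`. -/
noncomputable def divDiff (f : ℝ → ℝ) (n : ℕ) (x : Fin (n + 1) → ℝ) : ℝ :=
  ∑ j : Fin (n + 1), f (x j) / ∏ i ∈ Finset.univ.erase j, (x j - x i)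

/-- `f` is `n`-increasing on `I`: all `n`th-order divided differences at pairwise
distinct points of `I` are nonnegative. -/
def nIncreasingOn (f : ℝ → ℝ) (I : Set ℝ) (n : ℕ) : Prop :=
  ∀ x : Fin (n + 1) → ℝ, Function.Injective x → (∀ j, x j ∈ I) → 0 ≤ divDiff f n x

/-- `f` is `n`-decreasing on `I` if `-f` is `n`-increasing on `I`. -/
def nDecreasingOn (f : ℝ → ℝ) (I : Set ℝ) (n : ℕ) : Prop :=
  nIncreasingOn (fun u => -f u) I n

/-- `φ⁺_{p,n}(u) = ((u-p)_+)^n` for `n ≥ 1`, and `φ⁺_{p,0}` is the characteristic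
function of `(p,∞)`. -/
noncomputable def phiPlus (p : ℝ) (n : ℕ) (u : ℝ) : ℝ :=
  if n = 0 then (if p < u then 1 else 0) else (max 0 (u - p)) ^ n

/-- `φ⁻_{p,n}(u) = ((u-p)_−)^n` for `n ≥ 1`, and `φ⁻_{p,0}` is the characteristic
function of `(−∞,p)`. -/
noncomputable def phiMinus (p : ℝ) (n : ℕ) (u : ℝ) : ℝ :=
  if n = 0 then (if u < p then 1 else 0) else (max 0 (p - u)) ^ n

/- The set `J(p)` associated with an interval `I` and a point `p ∈ ℝ`:
`(−∞, (p − inf I)/(sup I − inf I))` if `p ≤ inf I` (interpreted as `(−∞,0)` when `I` is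
unbounded above), `ℝ` if `p ∈ I`, and `(1 + (p − sup I)/(sup I − inf I), ∞)` if
`p ≥ sup I` (interpreted as `(1,∞)` when `I` is unbounded below). -/
open scoped Classical in
noncomputable def Jset (I : Set ℝ) (p : ℝ) : Set ℝ :=
  if p ∈ I then Set.univ
  else if p ∈ lowerBounds I then
    (if BddAbove I then Set.Iio ((p - sInf I) / (sSup I - sInf I)) else Set.Iio 0)
  else
    (if BddBelow I then Set.Ioi (1 + (p - sSup I) / (sSup I - sInf I)) else Set.Ioi 1)

/-!
The increasing affine map `t ↦ (1 - t) x + t y` turns `φ⁺_{p,n}` into `(y - x)^n φ⁺_{l,n}`, where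
`l` is the parameter with `(1 - l) x + l y = p`. As `I` is a neighbourhood of `p`, every real `l`
arises from some `x < y` in `I`, so the inequality on `I` says exactly that `∫ φ⁺_{l,n} dμ ≥ 0` for
all `l`. This integral is `μ_n(l)` for `l < 0`, `μ_n^+(l)` for `0 ≤ l ≤ 1`, and `0` for `l > 1`.
What remains is `μ_n(0) ≥ 0`: for `n ≠ 0` it equals `μ_n^+(0)`, and `μ_0` is constant.
-/

open scoped Topology

section SInt

variable (μ : SignedMeasure ℝ)

lemma sInt_empty (f : ℝ → ℝ) : sInt μ ∅ f = 0 := by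
  simp [sInt]

lemma sInt_const_mul (A : Set ℝ) (c : ℝ) (f : ℝ → ℝ) :
    sInt μ A (fun t => c * f t) = c * sInt μ A f := by
  simp only [sInt, integral_const_mul, mul_sub]

lemma sInt_congr {A : Set ℝ} (hA : MeasurableSet A) {f g : ℝ → ℝ} (h : EqOn f g A) :
    sInt μ A f = sInt μ A g := by
  simp only [sInt, setIntegral_congr_fun hA h]

lemma sInt_indicator (A : Set ℝ) {B : Set ℝ} (hB : MeasurableSet B) (f : ℝ → ℝ) :
    sInt μ A (B.indicator f) = sInt μ (A ∩ B) f := by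
  simp only [sInt, setIntegral_indicator hB]

end SInt

section PhiPlus

variable {p u : ℝ} {n : ℕ}

lemma phiPlus_eq_pow_of_lt (h : p < u) : phiPlus p n u = (u - p) ^ n := by
  rcases eq_or_ne n 0 with rfl | hn
  · simp [phiPlus, h]
  · simp [phiPlus, hn, h.le]

lemma phiPlus_eq_zero_of_le (h : u ≤ p) : phiPlus p n u = 0 := by
  rcases eq_or_ne n 0 with rfl | hn
  · simp [phiPlus, h]
  · simp [phiPlus, hn, h]

lemma phiPlus_eq_pow_of_ne_zero_of_le (hn : n ≠ 0) (h : p ≤ u) : phiPlus p n u = (u - p) ^ n := by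
  simp [phiPlus, hn, h]

lemma phiPlus_eq_indicator (p : ℝ) (n : ℕ) :
    phiPlus p n = (Ioi p).indicator (fun u => (u - p) ^ n) := by
  ext u
  rcases lt_or_ge p u with h | h
  · rw [indicator_of_mem (mem_Ioi.2 h), phiPlus_eq_pow_of_lt h]
  · rw [indicator_of_notMem (notMem_Ioi.2 h), phiPlus_eq_zero_of_le h]

lemma phiPlus_mul_add {c : ℝ} (hc : 0 < c) (d p : ℝ) (n : ℕ) (u : ℝ) :
    phiPlus (c * p + d) n (c * u + d) = c ^ n * phiPlus p n u := by
  rcases lt_or_ge p u with h | h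
  · have h' : c * p + d < c * u + d := by gcongr
    rw [phiPlus_eq_pow_of_lt h, phiPlus_eq_pow_of_lt h', ← mul_pow]
    ring
  · have h' : c * u + d ≤ c * p + d := by gcongr
    rw [phiPlus_eq_zero_of_le h, phiPlus_eq_zero_of_le h', mul_zero]

end PhiPlus

section Moments

variable (μ : SignedMeasure ℝ)

lemma sInt_phiPlus_segment (A : Set ℝ) {x y : ℝ} (hxy : x < y) (n : ℕ) (l : ℝ) :
    sInt μ A (fun t => phiPlus ((1 - l) * x + l * y) n ((1 - t) * x + t * y)) =
      (y - x) ^ n * sInt μ A (phiPlus l n) := by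
  have affine (t : ℝ) : (1 - t) * x + t * y = (y - x) * t + x := by ring
  simp only [affine, phiPlus_mul_add (sub_pos.2 hxy), sInt_const_mul]

lemma sInt_phiPlus_eq_muPlus (n : ℕ) {l : ℝ} (hl : 0 ≤ l) :
    sInt μ (Icc 0 1) (phiPlus l n) = muPlus μ n l := by
  have inter_eq : Icc (0 : ℝ) 1 ∩ Ioi l = Ioc l 1 := by
    grind
  rw [phiPlus_eq_indicator, sInt_indicator μ _ measurableSet_Ioi, inter_eq, muPlus]

lemma sInt_phiPlus_eq_muK (n : ℕ) {l : ℝ} (hl : l < 0) :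
    sInt μ (Icc 0 1) (phiPlus l n) = muK μ n l :=
  sInt_congr μ measurableSet_Icc fun _ ht => phiPlus_eq_pow_of_lt (hl.trans_le ht.1)

lemma sInt_phiPlus_eq_muK_of_ne_zero {n : ℕ} (hn : n ≠ 0) {l : ℝ} (hl : l ≤ 0) :
    sInt μ (Icc 0 1) (phiPlus l n) = muK μ n l :=
  sInt_congr μ measurableSet_Icc fun _ ht => phiPlus_eq_pow_of_ne_zero_of_le hn (hl.trans ht.1)

lemma muK_zero_eq_muK_zero (l l' : ℝ) : muK μ 0 l = muK μ 0 l' := by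
  simp only [muK, pow_zero]

lemma muPlus_eq_zero_of_one_le (n : ℕ) {l : ℝ} (hl : 1 ≤ l) : muPlus μ n l = 0 := by
  rw [muPlus, Ioc_eq_empty hl.not_gt, sInt_empty]

lemma forall_sInt_phiPlus_nonneg_iff (n : ℕ) :
    (∀ l : ℝ, 0 ≤ sInt μ (Icc 0 1) (phiPlus l n)) ↔
      (∀ l ∈ Icc (0 : ℝ) 1, 0 ≤ muPlus μ n l) ∧ ∀ l : ℝ, l ≤ 0 → 0 ≤ muK μ n l := by
  constructor
  · refine fun h => ⟨fun l hl => sInt_phiPlus_eq_muPlus μ n hl.1 ▸ h l, fun l hl => ?_⟩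
    rcases eq_or_ne n 0 with rfl | hn
    · rw [muK_zero_eq_muK_zero μ l (-1), ← sInt_phiPlus_eq_muK μ 0 neg_one_lt_zero]
      exact h (-1)
    · exact sInt_phiPlus_eq_muK_of_ne_zero μ hn hl ▸ h l
  · rintro ⟨hplus, hK⟩ l
    rcases lt_or_ge l 0 with hneg | hnonneg
    · exact sInt_phiPlus_eq_muK μ n hneg ▸ hK l hneg.le
    rw [sInt_phiPlus_eq_muPlus μ n hnonneg]
    rcases le_total l 1 with hle | hge
    · exact hplus l ⟨hnonneg, hle⟩
    · exact (muPlus_eq_zero_of_one_le μ n hge).ge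

end Moments

lemma exists_lt_affineComb_eq_of_mem_nhds {I : Set ℝ} {p : ℝ} (hI : I ∈ 𝓝 p) (l : ℝ) :
    ∃ x ∈ I, ∃ y ∈ I, x < y ∧ (1 - l) * x + l * y = p := by
  have eventually_mem (a : ℝ) : ∀ᶠ ε in 𝓝[>] (0 : ℝ), p + a * ε ∈ I := by
    have tendsto_p : Filter.Tendsto (fun ε => p + a * ε) (𝓝 0) (𝓝 p) :=
      Continuous.tendsto' (by fun_prop) _ _ (by simp)
    exact (tendsto_p.mono_left nhdsWithin_le_nhds).eventually hI
  obtain ⟨ε, ⟨hx, hy⟩, hε : 0 < ε⟩ :=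
    ((eventually_mem (-l)).and (eventually_mem (1 - l)) |>.and self_mem_nhdsWithin).exists
  exact ⟨p + -l * ε, hx, p + (1 - l) * ε, hy, by linarith, by ring⟩

theorem stmt6_general {I : Set ℝ} {p : ℝ} (hI : I ∈ 𝓝 p) (n : ℕ) (μ : SignedMeasure ℝ) :
    (∀ x ∈ I, ∀ y ∈ I, x < y →
        0 ≤ sInt μ (Icc 0 1) (fun t => phiPlus p n ((1 - t) * x + t * y))) ↔
      ((∀ lam ∈ Icc (0 : ℝ) 1, 0 ≤ muPlus μ n lam) ∧
        ∀ lam : ℝ, lam ≤ 0 → 0 ≤ muK μ n lam) := by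
  rw [← forall_sInt_phiPlus_nonneg_iff]
  constructor
  · intro h l
    obtain ⟨x, hx, y, hy, hxy, rfl⟩ := exists_lt_affineComb_eq_of_mem_nhds hI l
    have hint := h x hx y hy hxy
    rw [sInt_phiPlus_segment μ _ hxy] at hint
    exact nonneg_of_mul_nonneg_right hint (pow_pos (sub_pos.2 hxy) n)
  · intro h x _ y _ hxy
    obtain ⟨l, rfl⟩ : ∃ l, (1 - l) * x + l * y = p :=
      ⟨(p - x) / (y - x), by field_simp [(sub_pos.2 hxy).ne']; ring⟩
    rw [sInt_phiPlus_segment μ _ hxy]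
    exact mul_nonneg (pow_nonneg (sub_pos.2 hxy).le n) (h l)

theorem stmt6 (I : Set ℝ) (hIo : IsOpen I) (hIc : I.OrdConnected) (hIne : I.Nonempty)
    (p : ℝ) (hp : p ∈ I) (n : ℕ) (μ : MeasureTheory.SignedMeasure ℝ) :
    (∀ x ∈ I, ∀ y ∈ I, x < y →
        0 ≤ sInt μ (Icc 0 1) (fun t => phiPlus p n ((1 - t) * x + t * y))) ↔
      ((∀ lam ∈ Icc (0:ℝ) 1, 0 ≤ muPlus μ n lam) ∧
        ∀ lam : ℝ, lam ≤ 0 → 0 ≤ muK μ n lam) :=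
  stmt6_general (hIo.mem_nhds hp) n μ
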